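/- arXiv:2305.11535 — 12 statements merged into one kernel-verified Lean document; each statement's English description precedes it below -/
import Mathlib

section
/- Let S be a semigroup and let s, t ∈ S. If z is a weak inverse of s*t (i.e. z = z*(s*t)*z), then t*z is a weak inverse of s, z*s is a weak inverse of t, and z = (z*s)*(t*z); in particular W(s*t) ⊆ W(t)·W(s). -/
/-- In a semigroup, `z` is a weak inverse of `s` if `z = z * s * z`. -/
def IsWeakInverse {S : Type*} [Semigroup S] (z s : S) : Prop := z = z * s * z

/-- If `z` is a weak inverse of `s * t`, then `t * z ∈ W(s)`, `z * s ∈ W(t)`,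
and `z = (z * s) * (t * z)`; in particular `W(s*t) ⊆ W(t)·W(s)`. -/
theorem stmt0 {S : Type*} [Semigroup S] (s t z : S)
    (hz : IsWeakInverse z (s * t)) :
    IsWeakInverse (t * z) s ∧ IsWeakInverse (z * s) t ∧ z = (z * s) * (t * z) := by
  have key : z * (s * (t * z)) = z := by
    simpa only [IsWeakInverse, mul_assoc] using hz.symm
  refine ⟨?_, ?_, ?_⟩
  · simp only [IsWeakInverse, mul_assoc, key]
  · have key' : z * (s * (t * (z * s))) = z * s := by
      simpa only [mul_assoc] using congrArg (· * s) key
    simp only [IsWeakInverse, mul_assoc, key']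
  · simp only [mul_assoc, key]
end

section
/- Let S be a semigroup and let s ∈ S with s ∉ Base(S). Then the 𝒥-class of s is trivial: for every t ∈ S, if s 𝒥 t then s = t. -/
/-- `SPow S m` is the set of elements of `S` expressible as a product of `m`
elements of `S` (for `m ≥ 1`; `SPow S 0` is set to the whole of `S` by convention). -/
def SPow (S : Type*) [Semigroup S] : ℕ → Set S
  | 0 => Set.univ
  | 1 => Set.univ
  | (n + 2) => {x | ∃ a ∈ SPow S (n + 1), ∃ b : S, x = a * b}

/-- `Base S = ⋂_{m ≥ 1} S^m`. -/
def Base (S : Type*) [Semigroup S] : Set S := {x | ∀ m : ℕ, 1 ≤ m → x ∈ SPow S m}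

/-- The principal two-sided ideal generated by `s`: `{s} ∪ Ss ∪ sS ∪ SsS`. -/
def principalIdeal {S : Type*} [Semigroup S] (s : S) : Set S :=
  {s} ∪ {x | ∃ a : S, x = a * s} ∪ {x | ∃ a : S, x = s * a} ∪
    {x | ∃ a b : S, x = a * s * b}

theorem SPow_succ_subset {S : Type*} [Semigroup S] (n : ℕ) :
    SPow S (n + 2) ⊆ SPow S (n + 1) := by
  induction n with
  | zero => exact fun _ _ => trivial
  | succ n ih =>
    rintro _ ⟨a, ha, b, rfl⟩
    exact ⟨a, ih ha, b, rfl⟩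

theorem mul_left_mem_SPow {S : Type*} [Semigroup S] (c : S) (n : ℕ) :
    ∀ x ∈ SPow S (n + 1), c * x ∈ SPow S (n + 2) := by
  induction n with
  | zero => exact fun x _ => ⟨c, trivial, x, rfl⟩
  | succ n ih =>
    rintro _ ⟨a, ha, b, rfl⟩
    exact ⟨c * a, ih a ha, b, (mul_assoc c a b).symm⟩

theorem self_mem_principalIdeal {S : Type*} [Semigroup S] (s : S) : s ∈ principalIdeal s :=
  Or.inl (Or.inl (Or.inl rfl))

/-- Elements of the principal ideal of `t` other than `t` are longer products than `t`. -/
theorem mem_SPow_succ_of_mem_principalIdeal {S : Type*} [Semigroup S] {s t : S} (hne : s ≠ t)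
    (hs : s ∈ principalIdeal t) {n : ℕ} (ht : t ∈ SPow S (n + 1)) : s ∈ SPow S (n + 2) := by
  rcases hs with ((rfl | ⟨a, rfl⟩) | ⟨a, rfl⟩) | ⟨a, b, rfl⟩
  · exact absurd rfl hne
  · exact mul_left_mem_SPow a n t ht
  · exact ⟨t, ht, a, rfl⟩
  · exact SPow_succ_subset (n + 1) ⟨a * t, mul_left_mem_SPow a n t ht, b, rfl⟩

/-- If `s ∉ Base(S)` then the 𝒥-class of `s` is trivial. -/
theorem stmt4 {S : Type*} [Semigroup S] (s : S) (h : s ∉ Base S) :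
    ∀ t : S, principalIdeal s = principalIdeal t → s = t := by
  intro t hst
  by_contra hne
  have hs : s ∈ principalIdeal t := hst ▸ self_mem_principalIdeal s
  have ht : t ∈ principalIdeal s := hst ▸ self_mem_principalIdeal t
  have key : ∀ n : ℕ, s ∈ SPow S (n + 1) ∧ t ∈ SPow S (n + 1) := by
    intro n
    induction n with
    | zero => exact ⟨trivial, trivial⟩
    | succ n ih =>
      exact ⟨mem_SPow_succ_of_mem_principalIdeal hne hs ih.2,
        mem_SPow_succ_of_mem_principalIdeal (Ne.symm hne) ht ih.1⟩
  refine h fun m hm => ?_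
  obtain ⟨n, rfl⟩ := Nat.exists_eq_add_of_le' hm
  exact (key n).1
end

section
/- Let S be a semigroup with Base(S) ≠ ∅. Then S is E-dense if and only if the subsemigroup Base(S) is E-dense; that is, (for every s ∈ S there exists t ∈ S with s*t idempotent) if and only if (for every s ∈ Base(S) there exists t ∈ Base(S) with s*t idempotent). -/
theorem mul_mem_SPow {S : Type*} [Semigroup S] (t : S) :
    ∀ (m : ℕ) {a : S}, a ∈ SPow S m → t * a ∈ SPow S m
  | 0, _, _ => Set.mem_univ _
  | 1, _, _ => Set.mem_univ _
  | n + 2, _, ⟨a, ha, b, hab⟩ =>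
    ⟨t * a, mul_mem_SPow t (n + 1) ha, b, by rw [hab, mul_assoc]⟩

theorem mul_mem_Base {S : Type*} [Semigroup S] (t : S) {a : S} (ha : a ∈ Base S) :
    t * a ∈ Base S :=
  fun m hm => mul_mem_SPow t m (ha m hm)

theorem idempotent_mem_SPow {S : Type*} [Semigroup S] {e : S} (he : e * e = e) :
    ∀ m : ℕ, e ∈ SPow S m
  | 0 => Set.mem_univ _
  | 1 => Set.mem_univ _
  | n + 2 => ⟨e, idempotent_mem_SPow he (n + 1), e, he.symm⟩

/-- For a semigroup with nonempty base, `S` is E-dense iff `Base(S)` is E-dense. -/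
theorem stmt6 {S : Type*} [Semigroup S] (hne : (Base S).Nonempty) :
    (∀ s : S, ∃ t : S, (s * t) * (s * t) = s * t) ↔
      (∀ s ∈ Base S, ∃ t ∈ Base S, (s * t) * (s * t) = s * t) := by
  constructor
  · intro h s _
    obtain ⟨t, ht⟩ := h s
    refine ⟨t * (s * t), mul_mem_Base t fun m _ => idempotent_mem_SPow ht m, ?_⟩
    rw [← mul_assoc s t (s * t), ht, ht]
  · intro h s
    obtain ⟨b, hb⟩ := hne
    obtain ⟨t, -, ht⟩ := h (s * b) (mul_mem_Base s hb)
    exact ⟨b * t, by rw [← mul_assoc s b t, ht]⟩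
end

section
/- Let S be a semigroup and let T ⊆ S be a two-sided ideal (for all t ∈ T and s ∈ S, s*t ∈ T and t*s ∈ T) which is globally idempotent (every element of T is a product of two elements of T). Suppose there exists m ≥ 1 such that every product of m elements of S lies in T (i.e. S^m ⊆ T). Then S^n = T for all n ≥ m; in particular S^m = S^{m+1} and Base(S) = T, so S is a finitely stratified extension with base T. -/
/-- A subset each of whose elements is a product of two of its elements lies in every `S^n`. -/
theorem subset_SPow_of_globally_idempotent {S : Type*} [Semigroup S] {T : Set S}
    (hGI : ∀ t ∈ T, ∃ a ∈ T, ∃ b ∈ T, t = a * b) : ∀ n : ℕ, T ⊆ SPow S n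
  | 0 => fun _ _ => trivial
  | 1 => fun _ _ => trivial
  | n + 2 => fun t ht => by
    obtain ⟨a, ha, b, -, rfl⟩ := hGI t ht
    exact ⟨a, subset_SPow_of_globally_idempotent hGI (n + 1) ha, b, rfl⟩

/-- If `S^m` lies in a right ideal `T` for some `m ≥ 1`, then so does `S^n` for all `n ≥ m`. -/
theorem SPow_subset_of_le {S : Type*} [Semigroup S] {T : Set S}
    (hT : ∀ t ∈ T, ∀ s : S, t * s ∈ T) {m n : ℕ} (hm : 1 ≤ m) (hSm : SPow S m ⊆ T)
    (hmn : m ≤ n) : SPow S n ⊆ T := by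
  induction n, hmn using Nat.le_induction with
  | base => exact hSm
  | succ n hmn ih =>
    obtain ⟨k, rfl⟩ := Nat.exists_eq_add_of_le' (hm.trans hmn)
    rintro _ ⟨a, ha, b, rfl⟩
    exact hT a (ih ha) b

/-- An ideal extension of a globally idempotent semigroup by a nilpotent semigroup
of finite index is a finitely stratified extension with base the ideal. -/
theorem stmt8 {S : Type*} [Semigroup S] (T : Set S)
    (hIdeal : ∀ t ∈ T, ∀ s : S, s * t ∈ T ∧ t * s ∈ T)
    (hGI : ∀ t ∈ T, ∃ a ∈ T, ∃ b ∈ T, t = a * b)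
    (m : ℕ) (hm : 1 ≤ m) (hSm : SPow S m ⊆ T) :
    (∀ n : ℕ, m ≤ n → SPow S n = T) ∧ SPow S m = SPow S (m + 1) ∧ Base S = T := by
  have hEq : ∀ n : ℕ, m ≤ n → SPow S n = T := fun n hn =>
    (SPow_subset_of_le (fun t ht s => (hIdeal t ht s).2) hm hSm hn).antisymm
      (subset_SPow_of_globally_idempotent hGI n)
  refine ⟨hEq, (hEq m le_rfl).trans (hEq (m + 1) m.le_succ).symm, ?_⟩
  exact Set.Subset.antisymm (fun x hx => hSm (hx m hm))
    fun x hx n _ => subset_SPow_of_globally_idempotent hGI n hx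
end

section
/- Let S be a conditionally completely regular semigroup and let a, b ∈ S be regular elements with a 𝒟 b. Then a*b 𝒟 a; consequently every regular 𝒟-class of S is closed under multiplication (and is a completely simple subsemigroup of S). -/
/-- Green's relation ℒ: `s ℒ t` iff `{s} ∪ Ss = {t} ∪ St`. -/
def LRel {S : Type*} [Semigroup S] (s t : S) : Prop :=
  ({s} ∪ {x | ∃ a : S, x = a * s} : Set S) = ({t} ∪ {x | ∃ a : S, x = a * t} : Set S)

/-- Green's relation ℛ: `s ℛ t` iff `{s} ∪ sS = {t} ∪ tS`. -/
def RRel {S : Type*} [Semigroup S] (s t : S) : Prop :=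
  ({s} ∪ {x | ∃ a : S, x = s * a} : Set S) = ({t} ∪ {x | ∃ a : S, x = t * a} : Set S)

/-- Green's relation ℋ = ℒ ∩ ℛ. -/
def HRel {S : Type*} [Semigroup S] (s t : S) : Prop := LRel s t ∧ RRel s t

/-- Green's relation 𝒟: `s 𝒟 t` iff `∃ u, s ℒ u` and `u ℛ t`. -/
def DRel {S : Type*} [Semigroup S] (s t : S) : Prop := ∃ u : S, LRel s u ∧ RRel u t

/-- An element `s` is regular if `s = s * x * s` for some `x`. -/
def IsRegularElem {S : Type*} [Semigroup S] (s : S) : Prop := ∃ x : S, s = s * x * s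

/-- `S` is conditionally completely regular if every regular element is
ℋ-related to an idempotent. -/
def CondCompletelyRegular (S : Type*) [Semigroup S] : Prop :=
  ∀ s : S, IsRegularElem s → ∃ e : S, e * e = e ∧ HRel s e

theorem LRel.eq_or_eq_mul {S : Type*} [Semigroup S] {s t : S} (h : LRel s t) :
    s = t ∨ ∃ c : S, s = c * t := by
  have hs : s ∈ ({s} ∪ {x | ∃ a : S, x = a * s} : Set S) := Or.inl rfl
  rwa [show ({s} ∪ {x | ∃ a : S, x = a * s} : Set S) = _ from h] at hs

theorem RRel.eq_or_eq_mul {S : Type*} [Semigroup S] {s t : S} (h : RRel s t) :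
    s = t ∨ ∃ c : S, s = t * c := by
  have hs : s ∈ ({s} ∪ {x | ∃ a : S, x = s * a} : Set S) := Or.inl rfl
  rwa [show ({s} ∪ {x | ∃ a : S, x = s * a} : Set S) = _ from h] at hs

theorem IsRegularElem.of_lRel {S : Type*} [Semigroup S] {s t : S} (hs : IsRegularElem s)
    (h : LRel s t) : IsRegularElem t := by
  obtain ⟨x, hx⟩ := hs
  have ht : t = t * x * s := by
    rcases LRel.eq_or_eq_mul (Eq.symm h : LRel t s) with rfl | ⟨c, rfl⟩
    · exact hx
    · rw [mul_assoc, mul_assoc, ← mul_assoc s, ← hx]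
  rcases h.eq_or_eq_mul with rfl | ⟨d, rfl⟩
  · exact ⟨x, hx⟩
  · exact ⟨x * d, by simpa only [mul_assoc] using ht⟩

theorem rRel_mul_self {S : Type*} [Semigroup S] {a b y : S} (h : a = a * b * y) :
    RRel (a * b) a := by
  apply Set.Subset.antisymm
  · rintro z (rfl | ⟨c, rfl⟩)
    · exact Or.inr ⟨b, rfl⟩
    · exact Or.inr ⟨b * c, mul_assoc _ _ _⟩
  · rintro z (rfl | ⟨c, rfl⟩)
    · exact Or.inr ⟨y, h⟩
    · exact Or.inr ⟨y * c, by rw [← mul_assoc, ← h]⟩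

/-- If the idempotent `e` satisfies `a ℒ e ℛ b`, then `a * b ℛ a`. -/
theorem rRel_mul_of_idempotent {S : Type*} [Semigroup S] {a b e : S} (he : e * e = e)
    (hae : LRel a e) (heb : RRel e b) : RRel (a * b) a := by
  have ha : a * e = a := by
    rcases hae.eq_or_eq_mul with rfl | ⟨c, rfl⟩
    · exact he
    · rw [mul_assoc, he]
  rcases heb.eq_or_eq_mul with rfl | ⟨y, rfl⟩
  · rw [ha]
    rfl
  · exact rRel_mul_self (by rw [mul_assoc, ha])

/-- In a conditionally completely regular semigroup, if `a, b` are regular and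
`a 𝒟 b`, then `a * b 𝒟 a`: every regular 𝒟-class is closed under multiplication. -/
theorem stmt11 {S : Type*} [Semigroup S] (hS : CondCompletelyRegular S)
    (a b : S) (ha : IsRegularElem a) (hb : IsRegularElem b) (hab : DRel a b) :
    DRel (a * b) a := by
  obtain ⟨u, hau, hub⟩ := hab
  obtain ⟨e, he, hue⟩ := hS u (ha.of_lRel hau)
  exact ⟨a * b, rfl, rRel_mul_of_idempotent he (Eq.trans hau hue.1) (Eq.trans (Eq.symm hue.2) hub)⟩
end

section
/- Let S be a conditionally completely regular semigroup and let s, t ∈ S. Then for every x ∈ S: there exists a weak inverse of s*t that is 𝒟-related to x if and only if (there exists a weak inverse of s that is 𝒟-related to x) and (there exists a weak inverse of t that is 𝒟-related to x). -/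
section GreenRelations

variable {S : Type*} [Semigroup S] {a b c : S}

theorem lRel_iff : LRel a b ↔ a = b ∨ (∃ p, a = p * b) ∧ ∃ q, b = q * a := by
  constructor
  · intro h
    have ha : a ∈ ({b} ∪ {x | ∃ p : S, x = p * b} : Set S) := h ▸ Or.inl rfl
    have hb : b ∈ ({a} ∪ {x | ∃ p : S, x = p * a} : Set S) := h.symm ▸ Or.inl rfl
    rcases ha with ha | ha
    · exact Or.inl ha
    · rcases hb with hb | hb
      · exact Or.inl hb.symm
      · exact Or.inr ⟨ha, hb⟩
  · rintro (rfl | ⟨⟨p, hp⟩, q, hq⟩)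
    · rfl
    · ext x
      constructor
      · rintro (rfl | ⟨r, rfl⟩)
        · exact Or.inr ⟨p, hp⟩
        · exact Or.inr ⟨r * p, by rw [mul_assoc, ← hp]⟩
      · rintro (rfl | ⟨r, rfl⟩)
        · exact Or.inr ⟨q, hq⟩
        · exact Or.inr ⟨r * q, by rw [mul_assoc, ← hq]⟩

theorem rRel_iff : RRel a b ↔ a = b ∨ (∃ p, a = b * p) ∧ ∃ q, b = a * q := by
  constructor
  · intro h
    have ha : a ∈ ({b} ∪ {x | ∃ p : S, x = b * p} : Set S) := h ▸ Or.inl rfl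
    have hb : b ∈ ({a} ∪ {x | ∃ p : S, x = a * p} : Set S) := h.symm ▸ Or.inl rfl
    rcases ha with ha | ha
    · exact Or.inl ha
    · rcases hb with hb | hb
      · exact Or.inl hb.symm
      · exact Or.inr ⟨ha, hb⟩
  · rintro (rfl | ⟨⟨p, hp⟩, q, hq⟩)
    · rfl
    · ext x
      constructor
      · rintro (rfl | ⟨r, rfl⟩)
        · exact Or.inr ⟨p, hp⟩
        · exact Or.inr ⟨p * r, by rw [← mul_assoc, ← hp]⟩
      · rintro (rfl | ⟨r, rfl⟩)
        · exact Or.inr ⟨q, hq⟩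
        · exact Or.inr ⟨q * r, by rw [← mul_assoc, ← hq]⟩

theorem LRel.of_mul {p q : S} (ha : a = p * b) (hb : b = q * a) : LRel a b :=
  lRel_iff.2 (Or.inr ⟨⟨p, ha⟩, q, hb⟩)

theorem RRel.of_mul {p q : S} (ha : a = b * p) (hb : b = a * q) : RRel a b :=
  rRel_iff.2 (Or.inr ⟨⟨p, ha⟩, q, hb⟩)

theorem LRel.mul_right (h : LRel a b) (c : S) : LRel (a * c) (b * c) := by
  obtain rfl | ⟨⟨p, hp⟩, q, hq⟩ := lRel_iff.1 h
  · rfl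
  exact .of_mul (p := p) (q := q) (by rw [← mul_assoc, ← hp]) (by rw [← mul_assoc, ← hq])

theorem RRel.mul_left (h : RRel a b) (c : S) : RRel (c * a) (c * b) := by
  obtain rfl | ⟨⟨p, hp⟩, q, hq⟩ := rRel_iff.1 h
  · rfl
  exact .of_mul (p := p) (q := q) (by rw [mul_assoc, ← hp]) (by rw [mul_assoc, ← hq])

/-- ℛ ∘ ℒ ⊆ ℒ ∘ ℛ. -/
theorem RRel.dRel_of_lRel (hr : RRel a b) (hl : LRel b c) : DRel a c := by
  obtain rfl | ⟨-, r, h⟩ := lRel_iff.1 hl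
  · exact ⟨a, rfl, hr⟩
  refine ⟨r * a, ?_, h ▸ hr.mul_left r⟩
  obtain rfl | ⟨⟨q, rfl⟩, -⟩ := rRel_iff.1 hr
  · exact h ▸ hl
  · rw [← mul_assoc, ← h]
    exact hl.mul_right q

theorem LRel.dRel (h : LRel a b) : DRel a b := ⟨b, h, rfl⟩

theorem RRel.dRel (h : RRel a b) : DRel a b := ⟨a, rfl, h⟩

theorem DRel.symm (h : DRel a b) : DRel b a := by
  obtain ⟨u, hl, hr⟩ := h
  exact RRel.dRel_of_lRel (Eq.symm hr) (Eq.symm hl)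

theorem DRel.trans (h : DRel a b) (h' : DRel b c) : DRel a c := by
  obtain ⟨u, hau, hub⟩ := h
  obtain ⟨v, hbv, hvc⟩ := h'
  obtain ⟨w, huw, hwv⟩ := hub.dRel_of_lRel hbv
  exact ⟨w, Eq.trans hau huw, Eq.trans hwv hvc⟩

theorem IsRegularElem.of_lRel_s13 (ha : IsRegularElem a) (h : LRel a b) : IsRegularElem b := by
  obtain ⟨x, hx⟩ := ha
  obtain rfl | ⟨⟨q, hq⟩, p, hp⟩ := lRel_iff.1 h
  · exact ⟨x, hx⟩
  refine ⟨x * q, ?_⟩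
  calc b = p * (a * x * a) := by rw [← hx, ← hp]
    _ = (p * a) * x * a := by simp only [mul_assoc]
    _ = b * x * (q * b) := by rw [← hp, ← hq]
    _ = b * (x * q) * b := by simp only [mul_assoc]

/-- An idempotent is a right identity on its ℒ-class. -/
theorem LRel.mul_idempotent {e : S} (he : e * e = e) (h : LRel a e) : a * e = a := by
  obtain rfl | ⟨⟨p, rfl⟩, -⟩ := lRel_iff.1 h
  · exact he
  · rw [mul_assoc, he]

/-- An idempotent is a left identity on its ℛ-class. -/
theorem RRel.idempotent_mul {e : S} (he : e * e = e) (h : RRel e a) : e * a = a := by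
  obtain rfl | ⟨-, p, rfl⟩ := rRel_iff.1 h
  · exact he
  · rw [← mul_assoc, he]

/-- In a conditionally completely regular semigroup, the product of two 𝒟-related regular
elements is ℛ-related to the left factor and ℒ-related to the right one. -/
theorem CondCompletelyRegular.mul_rRel_lRel (hS : CondCompletelyRegular S)
    (ha : IsRegularElem a) (h : DRel a b) : RRel (a * b) a ∧ LRel (a * b) b := by
  obtain ⟨u, hau, hub⟩ := h
  obtain ⟨e, he, hl, hr⟩ := hS u (ha.of_lRel_s13 hau)
  have hae : LRel a e := Eq.trans hau hl
  have heb : RRel e b := Eq.trans (Eq.symm hr) hub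
  have hR : RRel (a * e) (a * b) := heb.mul_left a
  have hL : LRel (a * b) (e * b) := hae.mul_right b
  rw [hae.mul_idempotent he] at hR
  rw [heb.idempotent_mul he] at hL
  exact ⟨Eq.symm hR, hL⟩

/-- A regular element has a 𝒟-related weak inverse. -/
theorem IsRegularElem.exists_weak_inverse (ha : IsRegularElem a) :
    ∃ w, w = w * a * w ∧ DRel w a := by
  obtain ⟨y, hy⟩ := ha
  have hy' : a * (y * a) = a := by rw [← mul_assoc, ← hy]
  have hw : y * a * y = y * a * y * a * (y * a * y) := by
    calc y * a * y = y * (a * (y * (a * (y * a)))) * y := by rw [hy', hy']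
      _ = _ := by simp only [mul_assoc]
  have haw : a = a * (y * a * y) * a := by
    calc a = a * (y * (a * (y * a))) := by rw [hy', hy']
      _ = _ := by simp only [mul_assoc]
  exact ⟨y * a * y, hw, a * (y * a * y), .of_mul (by rw [← mul_assoc]; exact hw) rfl,
    .of_mul rfl haw⟩

end GreenRelations

/-- In a conditionally completely regular semigroup, for any 𝒟-class (here
represented by an element `x`), `W(s*t)` meets the 𝒟-class of `x` iff both
`W(s)` and `W(t)` do. -/
theorem stmt13 {S : Type*} [Semigroup S] (hS : CondCompletelyRegular S)
    (s t : S) :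
    ∀ x : S,
      (∃ z : S, z = z * (s * t) * z ∧ DRel z x) ↔
        ((∃ z : S, z = z * s * z ∧ DRel z x) ∧ (∃ z : S, z = z * t * z ∧ DRel z x)) := by
  intro x
  constructor
  · rintro ⟨z, hz, hzx⟩
    refine ⟨⟨t * z, ?_, ?_⟩, ⟨z * s, ?_, ?_⟩⟩
    · calc t * z = t * (z * (s * t) * z) := by rw [← hz]
        _ = _ := by simp only [mul_assoc]
    · have h : LRel (t * z) z := .of_mul (q := z * s) rfl (by simpa only [mul_assoc] using hz)
      exact h.dRel.trans hzx
    · calc z * s = z * (s * t) * z * s := by rw [← hz]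
        _ = _ := by simp only [mul_assoc]
    · have h : RRel (z * s) z := .of_mul (q := t * z) rfl (by simpa only [mul_assoc] using hz)
      exact h.dRel.trans hzx
  · rintro ⟨⟨z₁, hz₁, hx₁⟩, ⟨z₂, hz₂, hx₂⟩⟩
    have he : RRel (z₁ * s) z₁ := .of_mul rfl hz₁
    have hf : LRel (t * z₂) z₂ := .of_mul rfl (by rw [← mul_assoc]; exact hz₂)
    have hz : DRel z₁ z₂ := hx₁.trans hx₂.symm
    have hereg : IsRegularElem (z₁ * s) := ⟨z₁ * s, by simp only [← mul_assoc, ← hz₁]⟩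
    have hfreg : IsRegularElem (t * z₂) := IsRegularElem.of_lRel_s13 ⟨t, hz₂⟩ (Eq.symm hf)
    obtain ⟨-, hpf⟩ := hS.mul_rRel_lRel hereg (he.dRel.trans (hz.trans hf.dRel.symm))
    obtain ⟨w, hw, hwp⟩ := (hfreg.of_lRel_s13 (Eq.symm hpf)).exists_weak_inverse
    have hwz₂ : DRel w z₂ := hwp.trans (hpf.dRel.trans hf.dRel)
    obtain ⟨-, hwz⟩ := hS.mul_rRel_lRel ⟨_, hw⟩ (hwz₂.trans hz.symm)
    obtain ⟨hR, -⟩ := hS.mul_rRel_lRel ⟨t, hz₂⟩ (hz.symm.trans hwz.dRel.symm)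
    refine ⟨z₂ * (w * z₁), ?_, hR.dRel.trans hx₂⟩
    calc z₂ * (w * z₁) = z₂ * (w * (z₁ * s * (t * z₂)) * w * z₁) := by rw [← hw]
      _ = _ := by simp only [mul_assoc]
end

section
/- Let S be a conditionally completely regular semigroup and define the relation ρ on S by: s ρ t iff for every x ∈ S, (some weak inverse of s is 𝒟-related to x) ↔ (some weak inverse of t is 𝒟-related to x). Then ρ is a congruence on S (if a ρ b and c ρ d then (a*c) ρ (b*d)), and moreover s ρ (s*s) and (s*t) ρ (t*s) for all s, t ∈ S; hence S/ρ is a semilattice. -/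
/-- The relation ρ: `s ρ t` iff for every `x`, some weak inverse of `s` is
𝒟-related to `x` exactly when some weak inverse of `t` is. -/
def rhoRel {S : Type*} [Semigroup S] (s t : S) : Prop :=
  ∀ x : S, (∃ z : S, z = z * s * z ∧ DRel z x) ↔ (∃ z : S, z = z * t * z ∧ DRel z x)

section GreenRelations

variable {S : Type*} [Semigroup S]

lemma LRel.of_eq_mul {s t a b : S} (hs : s = a * t) (ht : t = b * s) : LRel s t := by
  ext x
  constructor
  · rintro (rfl | ⟨c, rfl⟩)
    · exact Or.inr ⟨a, hs⟩
    · exact Or.inr ⟨c * a, by rw [mul_assoc, ← hs]⟩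
  · rintro (rfl | ⟨c, rfl⟩)
    · exact Or.inr ⟨b, ht⟩
    · exact Or.inr ⟨c * b, by rw [mul_assoc, ← ht]⟩

lemma RRel.of_eq_mul {s t a b : S} (hs : s = t * a) (ht : t = s * b) : RRel s t := by
  ext x
  constructor
  · rintro (rfl | ⟨c, rfl⟩)
    · exact Or.inr ⟨a, hs⟩
    · exact Or.inr ⟨a * c, by rw [← mul_assoc, ← hs]⟩
  · rintro (rfl | ⟨c, rfl⟩)
    · exact Or.inr ⟨b, ht⟩
    · exact Or.inr ⟨b * c, by rw [← mul_assoc, ← ht]⟩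

lemma LRel.exists_eq_mul_of_idem {e u : S} (he : e * e = e) (h : LRel e u) :
    (∃ k, e = k * u) ∧ u * e = u := by
  have h₁ : e ∈ ({u} ∪ {x | ∃ a : S, x = a * u} : Set S) := h ▸ Or.inl rfl
  have h₂ : u ∈ ({e} ∪ {x | ∃ a : S, x = a * e} : Set S) := h.symm ▸ Or.inl rfl
  constructor
  · rcases h₁ with rfl | h₁
    · exact ⟨e, he.symm⟩
    · exact h₁
  · rcases h₂ with rfl | ⟨a, rfl⟩
    · exact he
    · rw [mul_assoc, he]

lemma RRel.exists_eq_mul_of_idem {e u : S} (he : e * e = e) (h : RRel u e) :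
    ∃ k, e = u * k := by
  have h₁ : e ∈ ({u} ∪ {x | ∃ a : S, x = u * a} : Set S) := h.symm ▸ Or.inl rfl
  rcases h₁ with rfl | h₁
  · exact ⟨e, he.symm⟩
  · exact h₁

/-- The element `e` lies in `SsS`; for idempotent `e` this is the 𝒥-order `e ≤ s`. -/
def JBelow (e s : S) : Prop := ∃ p q : S, e = p * s * q

lemma JBelow.of_mul_left {e s t : S} (h : JBelow e (s * t)) : JBelow e s := by
  obtain ⟨p, q, h⟩ := h
  exact ⟨p, t * q, by simpa only [mul_assoc] using h⟩

lemma JBelow.of_mul_right {e s t : S} (h : JBelow e (s * t)) : JBelow e t := by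
  obtain ⟨p, q, h⟩ := h
  exact ⟨p * s, q, by simpa only [mul_assoc] using h⟩

lemma JBelow.of_DRel {e f s : S} (he : e * e = e) (hf : f * f = f) (h : JBelow f s)
    (hD : DRel f e) : JBelow e s := by
  obtain ⟨p, q, h⟩ := h
  obtain ⟨u, hL, hR⟩ := hD
  have huf := (hL.exists_eq_mul_of_idem hf).2
  obtain ⟨k, hk⟩ := hR.exists_eq_mul_of_idem he
  refine ⟨u * p, q * k, ?_⟩
  calc e = u * f * k := by rw [huf, hk]
    _ = _ := by rw [h]; simp only [mul_assoc]

lemma exists_weakInverse_DRel_iff (s x : S) :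
    (∃ z : S, z = z * s * z ∧ DRel z x) ↔ ∃ e : S, e * e = e ∧ JBelow e s ∧ DRel e x := by
  constructor
  · rintro ⟨z, hz, u, hL, hR⟩
    have he : s * z * (s * z) = s * z := by
      rw [mul_assoc, ← mul_assoc z, ← hz]
    refine ⟨s * z, he, ⟨s * z, z, by rw [mul_assoc, he]⟩, u, ?_, hR⟩
    have hLz : LRel (s * z) z := .of_eq_mul (a := s) (b := z) rfl (by rwa [← mul_assoc])
    exact hLz.trans hL
  · rintro ⟨e, he, ⟨p, q, hpq⟩, u, hL, hR⟩
    obtain ⟨⟨k, hk⟩, hue⟩ := hL.exists_eq_mul_of_idem he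
    have hmid (y : S) : p * (s * (q * y)) = e * y := by rw [hpq]; simp only [mul_assoc]
    have hee (y : S) : e * (e * y) = e * y := by rw [← mul_assoc, he]
    have hu (y : S) : u * (e * y) = u * y := by rw [← mul_assoc, hue]
    have hku (y : S) : k * (u * y) = e * y := by rw [← mul_assoc, ← hk]
    refine ⟨q * e * p, ?_, u * p, ?_, ?_⟩
    · simp only [mul_assoc, hmid, hee]
    · refine .of_eq_mul (a := q * k) (b := u * p * s) ?_ ?_
      · simp only [mul_assoc, hku]
      · simp only [mul_assoc, hmid, hee, hu]
    · have hRu : RRel (u * p) u := .of_eq_mul (a := p) (b := s * q) rfl <| by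
        rw [mul_assoc, ← mul_assoc p, ← hpq, hue]
      exact hRu.trans hR

lemma rhoRel_iff_JBelow (s t : S) :
    rhoRel s t ↔ ∀ e : S, e * e = e → (JBelow e s ↔ JBelow e t) := by
  simp only [rhoRel, exists_weakInverse_DRel_iff]
  constructor
  · intro h e he
    have hD : DRel e e := ⟨e, rfl, rfl⟩
    constructor
    · intro hs
      obtain ⟨f, hf, hft, hfe⟩ := (h e).1 ⟨e, he, hs, hD⟩
      exact hft.of_DRel he hf hfe
    · intro ht
      obtain ⟨f, hf, hfs, hfe⟩ := (h e).2 ⟨e, he, ht, hD⟩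
      exact hfs.of_DRel he hf hfe
  · intro h x
    exact exists_congr fun e ↦ and_congr_right fun he ↦ and_congr_left fun _ ↦ h e he

lemma CondCompletelyRegular.JBelow_mul_iff (hS : CondCompletelyRegular S) {e : S}
    (he : e * e = e) (a c : S) : JBelow e (a * c) ↔ JBelow e a ∧ JBelow e c := by
  refine ⟨fun h ↦ ⟨h.of_mul_left, h.of_mul_right⟩, ?_⟩
  rintro ⟨⟨p, q, ha⟩, r, t, hc⟩
  have hpaq (y : S) : p * (a * (q * y)) = e * y := by rw [ha]; simp only [mul_assoc]
  have hrct (y : S) : r * (c * (t * y)) = e * y := by rw [hc]; simp only [mul_assoc]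
  have hee (y : S) : e * (e * y) = e * y := by rw [← mul_assoc, he]
  obtain ⟨i, hi, hL, hR⟩ := hS (c * t * e * p * a)
    ⟨q * r, by simp only [mul_assoc, hpaq, hrct, hee]⟩
  have hui := (LRel.exists_eq_mul_of_idem hi hL.symm).2
  obtain ⟨k, hk⟩ := hR.exists_eq_mul_of_idem hi
  have hm : e * p * a * i = e * p * a := by
    have := congrArg (r * ·) hui
    simpa only [mul_assoc, hrct, hee] using this
  refine ⟨e * p, t * e * p * a * k * q, ?_⟩
  calc e = e * p * a * q := by
        rw [mul_assoc e, mul_assoc e, ← ha, he]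
    _ = e * p * a * (c * t * e * p * a * k) * q := by rw [← hk, hm]
    _ = _ := by simp only [mul_assoc]

end GreenRelations

/-- In a conditionally completely regular semigroup, ρ is a congruence and
`s ρ s²`, `st ρ ts`: `S/ρ` is a semilattice. -/
theorem stmt14 {S : Type*} [Semigroup S] (hS : CondCompletelyRegular S) :
    (∀ a b c d : S, rhoRel a b → rhoRel c d → rhoRel (a * c) (b * d)) ∧
      (∀ s : S, rhoRel s (s * s)) ∧ (∀ s t : S, rhoRel (s * t) (t * s)) := by
  simp only [rhoRel_iff_JBelow]
  refine ⟨fun a b c d hab hcd e he ↦ ?_, fun s e he ↦ ?_, fun s t e he ↦ ?_⟩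
  · rw [hS.JBelow_mul_iff he, hS.JBelow_mul_iff he, hab e he, hcd e he]
  · rw [hS.JBelow_mul_iff he, and_self_iff]
  · rw [hS.JBelow_mul_iff he, hS.JBelow_mul_iff he, and_comm]
end

section
/- Let S be a conditionally completely regular semigroup and let s ∈ S be an element with no weak inverse (W(s) = ∅). Then for every t ∈ S, the elements s*t and t*s also have no weak inverse. Consequently, either S is E-dense or the set {s ∈ S | W(s) = ∅} is a two-sided ideal of S. -/
/-- In a conditionally completely regular semigroup, if `s` has no weak inverse
then neither does `s*t` nor `t*s`; hence either `S` is E-dense or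
`{s | W(s) = ∅}` is a two-sided ideal. -/
theorem stmt15 {S : Type*} [Semigroup S] (hS : CondCompletelyRegular S)
    (s : S) (hs : ¬∃ z : S, z = z * s * z) :
    ∀ t : S, (¬∃ z : S, z = z * (s * t) * z) ∧ (¬∃ z : S, z = z * (t * s) * z) := by
  refine fun t => ⟨fun ⟨z, hz⟩ => hs ⟨t * z, ?_⟩, fun ⟨z, hz⟩ => hs ⟨z * t, ?_⟩⟩
  · calc t * z = t * (z * (s * t) * z) := by rw [← hz]
      _ = t * z * s * (t * z) := by simp only [mul_assoc]
  · calc z * t = z * (t * s) * z * t := by rw [← hz]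
      _ = z * t * s * (z * t) := by simp only [mul_assoc]
end

section
/- Let S be a conditionally completely regular semigroup and let s, t ∈ S both be regular. Then s ρ t if and only if s 𝒟 t, where ρ is the relation: s ρ t iff for every x ∈ S, (some weak inverse of s is 𝒟-related to x) ↔ (some weak inverse of t is 𝒟-related to x). -/
section GreenRelations

variable {S : Type*} [Semigroup S]

/-- An algebraic form of `𝒟`: `t = p * s * q`, where left multiplication by `p` and right
multiplication by `q` can be undone at `s`. It agrees with `𝒟` on regular elements. -/
def TranslationEquiv (s t : S) : Prop :=
  ∃ p p' q q' : S, p * s * q = t ∧ p' * (p * s) = s ∧ s * q * q' = s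

namespace TranslationEquiv

lemma symm {s t : S} (h : TranslationEquiv s t) : TranslationEquiv t s := by
  obtain ⟨p, p', q, q', rfl, hp, hq⟩ := h
  refine ⟨p', p, q', q, ?_, ?_, ?_⟩
  · rw [← mul_assoc p', hp, hq]
  · rw [← mul_assoc p', hp, mul_assoc]
  · rw [mul_assoc p, mul_assoc p, hq, mul_assoc]

lemma trans {s t u : S} (h : TranslationEquiv s t) (h' : TranslationEquiv t u) :
    TranslationEquiv s u := by
  obtain ⟨p, p', q, q', rfl, hp, hq⟩ := h
  obtain ⟨r, r', v, v', rfl, hr, hv⟩ := h'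
  refine ⟨r * p, p' * r', q * v, v' * q', by simp only [mul_assoc], ?_, ?_⟩
  · have key := congrArg (· * q') hr
    have hq' : s * (q * q') = s := by rw [← mul_assoc, hq]
    simp only [mul_assoc, hq'] at key
    simp only [mul_assoc, key, hp]
  · have key := congrArg (p' * ·) hv
    have hp' : ∀ x, p' * (p * (s * x)) = s * x := fun x => by
      rw [← mul_assoc p s, ← mul_assoc p', hp]
    simp only [mul_assoc, hp'] at key
    calc s * (q * v) * (v' * q') = (s * (q * (v * v'))) * q' := by simp only [mul_assoc]
      _ = s := by rw [key, hq]

lemma dRel {s t : S} (h : TranslationEquiv s t) : DRel s t := by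
  obtain ⟨p, p', q, q', rfl, hp, hq⟩ := h
  refine ⟨p * s, ?_, ?_⟩
  · ext x
    constructor
    · rintro (rfl | ⟨a, rfl⟩)
      · exact Or.inr ⟨p', hp.symm⟩
      · exact Or.inr ⟨a * p', by rw [mul_assoc, hp]⟩
    · rintro (rfl | ⟨a, rfl⟩)
      · exact Or.inr ⟨p, rfl⟩
      · exact Or.inr ⟨a * p, by rw [mul_assoc]⟩
  · have hq' : p * s * q * q' = p * s := by rw [mul_assoc p, mul_assoc p, hq]
    ext x
    constructor
    · rintro (rfl | ⟨a, rfl⟩)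
      · exact Or.inr ⟨q', hq'.symm⟩
      · exact Or.inr ⟨q' * a, by rw [← mul_assoc, hq']⟩
    · rintro (rfl | ⟨a, rfl⟩)
      · exact Or.inr ⟨q, rfl⟩
      · exact Or.inr ⟨q * a, by rw [← mul_assoc]⟩

/-- Weak inverses can be transported along `TranslationEquiv`. -/
lemma exists_weakInverse {s t z : S} (h : TranslationEquiv s t) (hz : z = z * s * z) :
    ∃ w, w = w * t * w ∧ TranslationEquiv z w := by
  obtain ⟨p, p', q, q', rfl, hp, hq⟩ := h
  have key : z * (p' * (p * (s * (q * (q' * z))))) = z := by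
    calc z * (p' * (p * (s * (q * (q' * z))))) = z * ((p' * (p * s)) * q * q') * z := by
          simp only [mul_assoc]
      _ = z := by rw [hp, hq, ← hz]
  refine ⟨q' * z * p', ?_, q', z * p' * (p * s * q), p', p * s * q * (q' * z), rfl, ?_, ?_⟩
  · calc q' * z * p' = q' * (z * (p' * (p * (s * (q * (q' * z)))))) * p' := by rw [key]
      _ = _ := by simp only [mul_assoc]
  · simpa only [mul_assoc] using key
  · simpa only [mul_assoc] using key

end TranslationEquiv

lemma LRel.exists_mul {s u : S} (h : LRel s u) (hs : IsRegularElem s) :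
    ∃ p p', u = p * s ∧ s = p' * u := by
  obtain ⟨x, hx⟩ := hs
  have hu : u ∈ ({s} ∪ {x | ∃ a : S, x = a * s} : Set S) := by
    rw [show _ = _ from h]; exact Or.inl rfl
  have hs' : s ∈ ({u} ∪ {x | ∃ a : S, x = a * u} : Set S) := by
    rw [← show _ = _ from h]; exact Or.inl rfl
  rcases hu with rfl | ⟨p, hp⟩
  · exact ⟨_, _, hx, hx⟩
  · rcases hs' with rfl | ⟨p', hp'⟩
    · exact ⟨_, _, hx, hx⟩
    · exact ⟨p, p', hp, hp'⟩

lemma RRel.exists_mul {s u : S} (h : RRel s u) (hs : IsRegularElem s) :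
    ∃ q q', u = s * q ∧ s = u * q' := by
  obtain ⟨x, hx⟩ := hs
  rw [mul_assoc] at hx
  have hu : u ∈ ({s} ∪ {x | ∃ a : S, x = s * a} : Set S) := by
    rw [show _ = _ from h]; exact Or.inl rfl
  have hs' : s ∈ ({u} ∪ {x | ∃ a : S, x = u * a} : Set S) := by
    rw [← show _ = _ from h]; exact Or.inl rfl
  rcases hu with rfl | ⟨q, hq⟩
  · exact ⟨_, _, hx, hx⟩
  · rcases hs' with rfl | ⟨q', hq'⟩
    · exact ⟨_, _, hx, hx⟩
    · exact ⟨q, q', hq, hq'⟩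

lemma DRel.translationEquiv {s t : S} (h : DRel s t) (hs : IsRegularElem s) :
    TranslationEquiv s t := by
  obtain ⟨u, hL, hR⟩ := h
  obtain ⟨p, p', hp, hp'⟩ := hL.exists_mul hs
  have hu : IsRegularElem u := by
    obtain ⟨x, hx⟩ := hs
    refine ⟨x * p', ?_⟩
    calc u = p * (s * x * s) := by rw [← hx, hp]
      _ = (p * s) * x * s := by simp only [mul_assoc]
      _ = u * (x * p') * u := by rw [← hp, mul_assoc u, mul_assoc u, mul_assoc x, ← hp',
          ← mul_assoc]
  obtain ⟨q, q', hq, hq'⟩ := hR.exists_mul hu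
  refine ⟨p, p', q, q', by rw [← hp, hq], by rw [← hp, ← hp'], ?_⟩
  calc s * q * q' = p' * (u * q * q') := by rw [hp']; simp only [mul_assoc]
    _ = s := by rw [← hq, ← hq', ← hp']

/-- A regular element has a weak inverse in its own `𝒟`-class. -/
lemma IsRegularElem.exists_weakInverse {s : S} (hs : IsRegularElem s) :
    ∃ z, z = z * s * z ∧ TranslationEquiv s z := by
  obtain ⟨x, hx⟩ := hs
  refine ⟨x * s * x, ?_, x, s, x, s, rfl, by rw [← mul_assoc, ← hx], hx.symm⟩
  calc x * s * x = x * (s * x * s) * x := by rw [← hx]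
    _ = x * ((s * x * s) * x * s) * x := by rw [← hx, ← hx]
    _ = _ := by simp only [mul_assoc]

/-- In a conditionally completely regular semigroup, comparable `𝒟`-related idempotents
coincide. -/
lemma CondCompletelyRegular.eq_of_le (hS : CondCompletelyRegular S) {g k : S}
    (hg : g * g = g) (hk : k * k = k) (hgk : g * k = k) (hkg : k * g = k)
    (h : TranslationEquiv g k) : k = g := by
  obtain ⟨p, p', q, q', hpq, hp, hq⟩ := h
  obtain ⟨a, ha⟩ : ∃ a, a = g * q := ⟨_, rfl⟩
  have haq : a * q' = g := by rw [ha, hq]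
  have hpa : p * a = k := by rw [ha, ← mul_assoc, hpq]
  have hga : g * a = a := by rw [ha, ← mul_assoc, hg]
  have hpk : p' * k = a := by rw [← hpq, ← mul_assoc, hp, ha]
  have hak : a * k = a := by rw [← hpk, mul_assoc, hk]
  have hreg : IsRegularElem a := ⟨q', by rw [haq, hga]⟩
  obtain ⟨e, he, hL, hR⟩ := hS a hreg
  obtain ⟨y, y', hy, -⟩ := hL.exists_mul hreg
  obtain ⟨v, v', hv, hv'⟩ := hR.exists_mul hreg
  have hea : e * a = a := by rw [hv', ← mul_assoc, he]
  have heg : e * g = g := by rw [← haq, ← mul_assoc, hea]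
  have hek : e * k = e := by rw [hy, mul_assoc, hak]
  have hge : g = e := by
    calc g = e * k * g := by rw [hek, heg]
      _ = e := by rw [mul_assoc, hkg, hek]
  rw [← hgk, hge, hek]

/-- If `z` is a weak inverse of `t` and `w`, in the `𝒟`-class of `t`, is a weak inverse of `z`,
then `z` lies in the `𝒟`-class of `t`. -/
lemma CondCompletelyRegular.translationEquiv_of_weakInverse (hS : CondCompletelyRegular S)
    {t z w : S} (ht : IsRegularElem t) (hz : z = z * t * z) (hw : w = w * z * w)
    (hwt : TranslationEquiv w t) : TranslationEquiv z t := by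
  obtain ⟨g, hg, hL, hR⟩ := hS t ht
  have htg : TranslationEquiv t g := DRel.translationEquiv ⟨g, hL, rfl⟩ ht
  have hgt : g * t = t := by
    obtain ⟨v, v', hv, hv'⟩ := hR.exists_mul ht
    rw [hv', ← mul_assoc, hg]
  obtain ⟨h, hh⟩ : ∃ h, h = t * z * g := ⟨_, rfl⟩
  have hgh : g * h = h := by rw [hh, ← mul_assoc, ← mul_assoc, hgt]
  have hhg : h * g = h := by rw [hh, mul_assoc, hg]
  have hzz : z * g * (t * z) = z := by
    rw [← mul_assoc, mul_assoc z, hgt, ← hz]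
  have hidem : h * h = h := by
    calc h * h = t * (z * g * (t * z)) * g := by rw [hh]; simp only [mul_assoc]
      _ = h := by rw [hzz, hh]
  have hzh : TranslationEquiv z h :=
    ⟨t, z, g, t * z, hh.symm, by rw [← mul_assoc, ← hz], hzz⟩
  obtain ⟨v, hv, hwv⟩ := hzh.exists_weakInverse hw
  obtain ⟨k, hk⟩ : ∃ k, k = h * v * h := ⟨_, rfl⟩
  have hvk : TranslationEquiv v k :=
    ⟨h, v, h, v, hk.symm, by rw [← mul_assoc, ← hv], hv.symm⟩
  have hhk : h * k = k := by rw [hk, ← mul_assoc, ← mul_assoc, hidem]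
  have hkh : k * h = k := by rw [hk, mul_assoc, hidem]
  have hkk : k * k = k := by
    calc k * k = k * h * v * h := by nth_rw 2 [hk]; simp only [mul_assoc]
      _ = h * (v * h * v) * h := by rw [hkh, hk]; simp only [mul_assoc]
      _ = k := by rw [← hv, hk]
  have hkg : k = g := hS.eq_of_le hg hkk (by rw [← hhk, ← mul_assoc, hgh])
    (by rw [← hkh, mul_assoc, hhg]) (htg.symm.trans (hwt.symm.trans (hwv.trans hvk)))
  have hhg' : h = g := by rw [← hhg, ← hkg, hhk]
  exact (hhg' ▸ hzh).trans htg.symm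

end GreenRelations

/-- In a conditionally completely regular semigroup, for regular `s, t`:
`s ρ t` iff `s 𝒟 t`. -/
theorem stmt16 {S : Type*} [Semigroup S] (hS : CondCompletelyRegular S)
    (s t : S) (hs : IsRegularElem s) (ht : IsRegularElem t) :
    rhoRel s t ↔ DRel s t := by
  constructor
  · intro h
    obtain ⟨s', hs', hss'⟩ := hs.exists_weakInverse
    obtain ⟨t', ht', htt'⟩ := ht.exists_weakInverse
    obtain ⟨z, hz, hzs⟩ := (h s).1 ⟨s', hs', hss'.symm.dRel⟩
    obtain ⟨w, hw, hwt⟩ := (h t).2 ⟨t', ht', htt'.symm.dRel⟩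
    have hzs := hzs.translationEquiv ⟨t, hz⟩
    have hwt := hwt.translationEquiv ⟨s, hw⟩
    obtain ⟨v, hv, hwv⟩ := hzs.symm.exists_weakInverse hw
    exact (hzs.symm.trans
      (hS.translationEquiv_of_weakInverse ht hz hv (hwv.symm.trans hwt))).dRel
  · intro h x
    have hst := h.translationEquiv hs
    constructor
    · rintro ⟨z, hz, hzx⟩
      obtain ⟨w, hw, hzw⟩ := hst.exists_weakInverse hz
      exact ⟨w, hw, (hzw.symm.trans (hzx.translationEquiv ⟨s, hz⟩)).dRel⟩
    · rintro ⟨z, hz, hzx⟩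
      obtain ⟨w, hw, hzw⟩ := hst.symm.exists_weakInverse hz
      exact ⟨w, hw, (hzw.symm.trans (hzx.translationEquiv ⟨t, hz⟩)).dRel⟩
end

section
/- Let S be an E-dense semigroup such that the set Reg(S) of regular elements is a completely simple subsemigroup of S (that is: Reg(S) is closed under multiplication, any two regular elements are 𝒟-related, and every regular element is ℋ-related to an idempotent). Then Reg(S) is a two-sided ideal of S: for every regular s ∈ S and every t ∈ S, both s*t and t*s are regular. -/
section GreenRelations

variable {S : Type*} [Semigroup S]

theorem LRel.symm {s t : S} (h : LRel s t) : LRel t s := Eq.symm h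

theorem RRel.symm {s t : S} (h : RRel s t) : RRel t s := Eq.symm h

theorem LRel.eq_or_exists_eq_mul {s t : S} (h : LRel s t) : s = t ∨ ∃ a, s = a * t := by
  have hs : s ∈ ({s} ∪ {x | ∃ a : S, x = a * s} : Set S) := Or.inl rfl
  rw [h] at hs
  exact hs

theorem RRel.eq_or_exists_eq_mul {s t : S} (h : RRel s t) : s = t ∨ ∃ a, s = t * a := by
  have hs : s ∈ ({s} ∪ {x | ∃ a : S, x = s * a} : Set S) := Or.inl rfl
  rw [h] at hs
  exact hs

theorem IsRegularElem.of_rRel {s t : S} (ht : IsRegularElem t) (h : RRel s t) :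
    IsRegularElem s := by
  obtain ⟨y, hy⟩ := ht
  rcases h.eq_or_exists_eq_mul with rfl | ⟨c, hc⟩
  · exact ⟨y, hy⟩
  · have hs : t * y * s = s := by rw [hc, ← mul_assoc, ← hy]
    rcases h.symm.eq_or_exists_eq_mul with rfl | ⟨d, hd⟩
    · exact ⟨y, hs.symm⟩
    · exact ⟨d * y, by rw [← mul_assoc, ← hd, hs]⟩

/-- An element of a group ℋ-class is ℛ-below its square. -/
theorem HRel.exists_eq_mul_self_mul {u e : S} (he : e * e = e) (h : HRel u e) :
    ∃ z, u = u * u * z := by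
  have hue : u * e = u := by
    rcases h.1.eq_or_exists_eq_mul with rfl | ⟨a, ha⟩
    · exact he
    · rw [ha, mul_assoc, he]
  rcases h.2.symm.eq_or_exists_eq_mul with rfl | ⟨k, hk⟩
  · exact ⟨e, by rw [he, he]⟩
  · exact ⟨k, by rw [mul_assoc, ← hk, hue]⟩

/-- An element of a group ℋ-class is ℒ-below its square. -/
theorem HRel.exists_eq_mul_mul_self {u e : S} (he : e * e = e) (h : HRel u e) :
    ∃ z, u = z * (u * u) := by
  have heu : e * u = u := by
    rcases h.2.eq_or_exists_eq_mul with rfl | ⟨a, ha⟩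
    · exact he
    · rw [ha, ← mul_assoc, he]
  rcases h.1.symm.eq_or_exists_eq_mul with rfl | ⟨k, hk⟩
  · exact ⟨e, by rw [he, he]⟩
  · exact ⟨k, by rw [← mul_assoc, ← hk, heu]⟩

theorem exists_eq_mul_mul_right {a b u z : S} (hau : LRel a u) (hub : RRel u b)
    (hz : u = u * u * z) : ∃ w, a = a * b * w := by
  have ha : a = a * (u * z) := by
    rcases hau.eq_or_exists_eq_mul with rfl | ⟨p, hp⟩
    · rw [← mul_assoc, ← hz]
    · rw [hp, mul_assoc, ← mul_assoc u, ← hz]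
  rcases hub.eq_or_exists_eq_mul with rfl | ⟨c, hc⟩
  · exact ⟨z, by rw [mul_assoc, ← ha]⟩
  · exact ⟨c * z, by rw [mul_assoc, ← mul_assoc b, ← hc, ← ha]⟩

theorem exists_eq_mul_mul_left {a b u z : S} (hau : LRel a u) (hub : RRel u b)
    (hz : u = z * (u * u)) : ∃ w, b = w * (a * b) := by
  have hb : b = z * u * b := by
    rcases hub.symm.eq_or_exists_eq_mul with rfl | ⟨p, hp⟩
    · rw [mul_assoc, ← hz]
    · rw [hp, ← mul_assoc, mul_assoc z, ← hz]
  rcases hau.symm.eq_or_exists_eq_mul with rfl | ⟨c, hc⟩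
  · exact ⟨z, by rw [← mul_assoc, ← hb]⟩
  · exact ⟨z * c, by rw [← mul_assoc, mul_assoc z, ← hc, ← hb]⟩

theorem isRegularElem_of_idempotent {e : S} (he : e * e = e) : IsRegularElem e :=
  ⟨e, by rw [he, he]⟩

end GreenRelations

/-- If `S` is E-dense and `Reg(S)` is a completely simple subsemigroup (closed
under multiplication, any two regular elements 𝒟-related, every regular element
ℋ-related to an idempotent), then `Reg(S)` is a two-sided ideal of `S`. -/
theorem stmt17 {S : Type*} [Semigroup S]
    (hEdense : ∀ s : S, ∃ t : S, (s * t) * (s * t) = s * t)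
    (hclosed : ∀ a b : S, IsRegularElem a → IsRegularElem b → IsRegularElem (a * b))
    (hsimple : ∀ a b : S, IsRegularElem a → IsRegularElem b → DRel a b)
    (hidem : ∀ a : S, IsRegularElem a → ∃ e : S, e * e = e ∧ HRel a e) :
    ∀ s t : S, IsRegularElem s → IsRegularElem (s * t) ∧ IsRegularElem (t * s) := by
  have hright : ∀ a b : S, IsRegularElem a → IsRegularElem b → ∃ w, a = a * b * w := by
    intro a b ha hb
    obtain ⟨u, hau, hub⟩ := hsimple a b ha hb
    obtain ⟨e, he, hue⟩ := hidem u (hb.of_rRel hub)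
    obtain ⟨z, hz⟩ := hue.exists_eq_mul_self_mul he
    exact exists_eq_mul_mul_right hau hub hz
  have hleft : ∀ a b : S, IsRegularElem a → IsRegularElem b → ∃ w, b = w * (a * b) := by
    intro a b ha hb
    obtain ⟨u, hau, hub⟩ := hsimple a b ha hb
    obtain ⟨e, he, hue⟩ := hidem u (hb.of_rRel hub)
    obtain ⟨z, hz⟩ := hue.exists_eq_mul_mul_self he
    exact exists_eq_mul_mul_left hau hub hz
  rintro s t ⟨x, hx⟩
  constructor
  · have he : s * x * (s * x) = s * x := by rw [← mul_assoc, ← hx]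
    obtain ⟨t', ht'⟩ := hEdense (s * t)
    obtain ⟨w, hw⟩ := hright (s * x) (s * t * t') (isRegularElem_of_idempotent he)
      (isRegularElem_of_idempotent ht')
    have her : s * x * (s * t * t') = s * t * t' := by
      rw [← mul_assoc, ← mul_assoc, ← hx]
    rw [her] at hw
    refine ⟨t' * w, ?_⟩
    rw [← mul_assoc (s * t), ← hw, ← mul_assoc, ← hx]
  · have he : x * s * (x * s) = x * s := by rw [mul_assoc, ← mul_assoc s, ← hx]
    obtain ⟨t', ht'⟩ := hEdense (t * s)
    have hr : t' * (t * s) * t' * (t * s) * (t' * (t * s) * t' * (t * s)) =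
        t' * (t * s) * t' * (t * s) := by
      generalize t * s = y at ht'
      calc t' * y * t' * y * (t' * y * t' * y)
          = t' * (y * t' * (y * t') * (y * t')) * y := by simp only [mul_assoc]
        _ = t' * y * t' * y := by rw [ht', ht']; simp only [mul_assoc]
    obtain ⟨w, hw⟩ := hleft (t' * (t * s) * t' * (t * s)) (x * s)
      (isRegularElem_of_idempotent hr) (isRegularElem_of_idempotent he)
    have hre : t' * (t * s) * t' * (t * s) * (x * s) = t' * (t * s) * t' * (t * s) := by
      rw [mul_assoc _ (t * s), mul_assoc t, ← mul_assoc s, ← hx]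
    rw [hre] at hw
    refine ⟨w * (t' * (t * s) * t'), ?_⟩
    rw [mul_assoc (t * s), mul_assoc w, ← hw, mul_assoc t, ← mul_assoc s, ← hx]
end

section
/- Let S be an eventually regular, conditionally completely regular semigroup, let e ∈ S be idempotent, and let s ∈ S be such that s^n ℋ e for some n ≥ 1 (i.e. s ∈ K_e). Then the 𝒥-class of e is the greatest 𝒥-class containing a weak inverse of s: there exists a weak inverse s' of s with s' 𝒥 e, and for every weak inverse s' of s, the principal two-sided ideal {s'} ∪ Ss' ∪ s'S ∪ Ss'S is contained in {e} ∪ Se ∪ eS ∪ SeS. -/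
/-- `spow s n` is the power `s^(n+1)`, so that `spow s n` ranges over all
positive powers of `s` as `n` ranges over `ℕ`. -/
def spow {S : Type*} [Semigroup S] (s : S) : ℕ → S
  | 0 => s
  | n + 1 => spow s n * s

/-- Green's relation 𝒥: equality of principal two-sided ideals. -/
def JRel {S : Type*} [Semigroup S] (s t : S) : Prop := principalIdeal s = principalIdeal t

section Auxiliary

variable {S : Type*} [Semigroup S]

theorem LRel.mul_right_idempotent {s e : S} (h : LRel s e) (he : e * e = e) : s * e = s := by
  have hs : s ∈ ({e} ∪ {x | ∃ a : S, x = a * e} : Set S) := h ▸ Or.inl rfl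
  rcases hs with rfl | ⟨a, rfl⟩
  · exact he
  · rw [mul_assoc, he]

theorem RRel.idempotent_mul_left {s e : S} (h : RRel s e) (he : e * e = e) : e * s = s := by
  have hs : s ∈ ({e} ∪ {x | ∃ a : S, x = e * a} : Set S) := h ▸ Or.inl rfl
  rcases hs with rfl | ⟨a, rfl⟩
  · exact he
  · rw [← mul_assoc, he]

theorem LRel.exists_idempotent_eq_mul {s e : S} (h : LRel s e) (he : e * e = e) :
    ∃ a : S, e = a * s := by
  have hs : e ∈ ({s} ∪ {x | ∃ a : S, x = a * s} : Set S) := h ▸ Or.inl rfl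
  rcases hs with rfl | ⟨a, ha⟩
  · exact ⟨e, he.symm⟩
  · exact ⟨a, ha⟩

theorem CondCompletelyRegular.exists_eq_mul_mul_self (hS : CondCompletelyRegular S) {u : S}
    (hu : IsRegularElem u) : ∃ d : S, u = d * u * u := by
  obtain ⟨f, hf, hL, hR⟩ := hS u hu
  obtain ⟨a, ha⟩ := hL.exists_idempotent_eq_mul hf
  exact ⟨a, by rw [← ha, hR.idempotent_mul_left hf]⟩

theorem spow_mul_comm_self (s : S) (n : ℕ) : spow s n * s = s * spow s n := by
  induction n with
  | zero => rfl
  | succ n ih => rw [spow, ← mul_assoc, ← ih]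

theorem exists_mul_spow_mul_self_eq (s a : S) (k : ℕ) :
    ∃ b : S, a * spow (s * s) k = b * spow s (k + 1) := by
  induction k with
  | zero => exact ⟨a, rfl⟩
  | succ k ih =>
    obtain ⟨b, hb⟩ := ih
    refine ⟨b * s, ?_⟩
    calc a * spow (s * s) (k + 1) = a * spow (s * s) k * (s * s) := (mul_assoc _ _ _).symm
      _ = b * (spow s (k + 1 + 1) * s) := by rw [hb, spow.eq_2 s (k + 1)]; simp only [mul_assoc]
      _ = b * s * spow s (k + 1 + 1) := by rw [spow_mul_comm_self, mul_assoc]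

/-- If `s` has a weak inverse `z`, then `s * s` has a weak inverse that is 𝒥-above `z`. -/
theorem CondCompletelyRegular.exists_weakInverse_mul_self (hS : CondCompletelyRegular S)
    {s z : S} (hz : z = z * s * z) :
    ∃ w : S, w = w * (s * s) * w ∧ ∃ a b : S, z = a * w * b := by
  have hz' : z * (s * z) = z := by rw [← mul_assoc, ← hz]
  have hzz (x : S) : z * (s * (z * x)) = z * x := by
    rw [← mul_assoc s, ← mul_assoc z, hz']
  obtain ⟨d, hd⟩ := hS.exists_eq_mul_mul_self (u := s * z * s)
    ⟨z, by simp only [mul_assoc, hzz]⟩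
  have hc : z * d * s * z * (s * s) * z = z := by
    calc z * d * s * z * (s * s) * z = z * (d * (s * z * s) * (s * z * s)) * z := by
          simp only [mul_assoc, hz']
      _ = z := by rw [← hd]; simp only [mul_assoc, hz']
  refine ⟨z * d * s * z, ?_, z * s, s * s * z, ?_⟩
  · calc z * d * s * z = z * d * s * z * (s * s) * z * d * s * z := by rw [hc]
      _ = z * d * s * z * (s * s) * (z * d * s * z) := by simp only [mul_assoc]
  · rw [mul_assoc (z * s), ← mul_assoc _ (s * s), hc, ← hz]

/-- Every weak inverse of `s` lies 𝒥-below every positive power of `s`. -/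
theorem CondCompletelyRegular.weakInverse_eq_mul_spow_mul (hS : CondCompletelyRegular S)
    (n : ℕ) {s z : S} (hz : z = z * s * z) : ∃ a b : S, z = a * spow s n * b := by
  induction n generalizing s z with
  | zero => exact ⟨z, z, hz⟩
  | succ k ih =>
    obtain ⟨w, hw, a, b, hab⟩ := hS.exists_weakInverse_mul_self hz
    obtain ⟨c, d, hcd⟩ := ih hw
    obtain ⟨p, hp⟩ := exists_mul_spow_mul_self_eq s c k
    exact ⟨a * p, d * b, by rw [hab, hcd, hp]; simp only [mul_assoc]⟩

theorem principalIdeal_subset_of_eq_mul_mul {x y a b : S} (h : x = a * y * b) :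
    principalIdeal x ⊆ principalIdeal y := by
  subst h
  rintro t (((rfl | ⟨c, rfl⟩) | ⟨c, rfl⟩) | ⟨c, d, rfl⟩)
  · exact Or.inr ⟨a, b, rfl⟩
  · exact Or.inr ⟨c * a, b, by simp only [mul_assoc]⟩
  · exact Or.inr ⟨a, b * c, by simp only [mul_assoc]⟩
  · exact Or.inr ⟨c * a, b * d, by simp only [mul_assoc]⟩

end Auxiliary

/-- In an eventually regular, conditionally completely regular semigroup, if
`e` is idempotent and some positive power of `s` is ℋ-related to `e`
(`s ∈ K_e`), then `J_e` is the greatest 𝒥-class containing a weak inverse of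
`s`: some weak inverse of `s` is 𝒥-related to `e`, and every weak inverse of
`s` generates a principal ideal contained in that of `e`. -/
theorem stmt18 {S : Type*} [Semigroup S]
    (hER : ∀ a : S, ∃ n : ℕ, IsRegularElem (spow a n))
    (hS : CondCompletelyRegular S)
    (e : S) (he : e * e = e) (s : S) (hs : ∃ n : ℕ, HRel (spow s n) e) :
    (∃ z : S, z = z * s * z ∧ JRel z e) ∧
      (∀ z : S, z = z * s * z → principalIdeal z ⊆ principalIdeal e) := by
  obtain ⟨n, hL, -⟩ := hs
  refine ⟨?_, fun z hz => ?_⟩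
  · obtain ⟨p, hp⟩ : ∃ p : S, e = p * s := by
      obtain ⟨a, ha⟩ := hL.exists_idempotent_eq_mul he
      cases n with
      | zero => exact ⟨a, ha⟩
      | succ n => exact ⟨a * spow s n, by rw [ha, spow, mul_assoc]⟩
    have hze : e * p * s = e := by rw [mul_assoc, ← hp, he]
    refine ⟨e * p, by rw [hze, ← mul_assoc, he], Set.Subset.antisymm ?_ ?_⟩
    · exact principalIdeal_subset_of_eq_mul_mul (a := e) (b := p) (by rw [he])
    · exact principalIdeal_subset_of_eq_mul_mul (a := e) (b := s) (by
        rw [mul_assoc, hze, he])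
  · obtain ⟨a, b, hab⟩ := hS.weakInverse_eq_mul_spow_mul n hz
    refine principalIdeal_subset_of_eq_mul_mul (a := a * spow s n) (b := b) ?_
    rw [mul_assoc a, hL.mul_right_idempotent he, ← hab]
end

section
/- Let S be a group-bound, conditionally completely regular semigroup and let ρ be the relation: s ρ t iff for every x ∈ S, (some weak inverse of s is 𝒟-related to x) ↔ (some weak inverse of t is 𝒟-related to x). Then: (i) for all s, t ∈ S, s ρ t if and only if there exist idempotents e, f with e 𝒥 f and integers n, m ≥ 1 such that s^n ℋ e and t^m ℋ f (i.e. the ρ-classes are exactly the sets K_{J_e} = ⋃_{f ∈ E(J_e)} K_f); and (ii) each ρ-class is an Archimedean subsemigroup: if s ρ t then there exist n ≥ 1 and u, v ∈ S with u ρ s, v ρ s, and s^n = u*t*v. -/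
section GreenRelations

variable {S : Type*} [Semigroup S]

theorem LRel.of_mul_eq {x y a b : S} (h : a * x = y) (h' : b * y = x) : LRel x y := by
  ext w
  constructor
  · rintro (rfl | ⟨c, rfl⟩)
    · exact Or.inr ⟨b, h'.symm⟩
    · exact Or.inr ⟨c * b, by rw [mul_assoc, h']⟩
  · rintro (rfl | ⟨c, rfl⟩)
    · exact Or.inr ⟨a, h.symm⟩
    · exact Or.inr ⟨c * a, by rw [mul_assoc, h]⟩

theorem RRel.of_mul_eq {x y a b : S} (h : x * a = y) (h' : y * b = x) : RRel x y := by
  ext w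
  constructor
  · rintro (rfl | ⟨c, rfl⟩)
    · exact Or.inr ⟨b, h'.symm⟩
    · exact Or.inr ⟨b * c, by rw [← mul_assoc, h']⟩
  · rintro (rfl | ⟨c, rfl⟩)
    · exact Or.inr ⟨a, h.symm⟩
    · exact Or.inr ⟨a * c, by rw [← mul_assoc, h]⟩

theorem LRel.eq_or_eq_mul_s19 {x y : S} (h : LRel x y) : x = y ∨ ∃ a, x = a * y :=
  h.subset (Or.inl rfl)

theorem RRel.eq_or_eq_mul_s19 {x y : S} (h : RRel x y) : x = y ∨ ∃ a, x = y * a :=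
  h.subset (Or.inl rfl)

/-- An element ℋ-related to an idempotent `e` has an inverse with respect to `e`. -/
theorem HRel.exists_inverse {a e : S} (h : HRel a e) (he : e * e = e) :
    ∃ b, a * b = e ∧ b * a = e ∧ e * a = a ∧ a * e = a ∧ b * e = b := by
  have hea : e * a = a := by
    rcases h.2.eq_or_eq_mul_s19 with rfl | ⟨c, rfl⟩
    · exact he
    · rw [← mul_assoc, he]
  have hae : a * e = a := by
    rcases h.1.eq_or_eq_mul_s19 with rfl | ⟨c, rfl⟩
    · exact he
    · rw [mul_assoc, he]
  obtain ⟨c, hc⟩ : ∃ c, a * c = e := by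
    rcases RRel.eq_or_eq_mul_s19 h.2.symm with rfl | ⟨c, hc⟩
    · exact ⟨e, he⟩
    · exact ⟨c, hc.symm⟩
  obtain ⟨d, hd⟩ : ∃ d, d * a = e := by
    rcases LRel.eq_or_eq_mul_s19 h.1.symm with rfl | ⟨d, hd⟩
    · exact ⟨e, he⟩
    · exact ⟨d, hd.symm⟩
  have hca : e * c * a = e := by
    rw [← hd, mul_assoc d a c, hc, mul_assoc, hea]
  refine ⟨e * c * e, ?_, ?_, hea, hae, ?_⟩
  · rw [← mul_assoc, ← mul_assoc, hae, hc, he]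
  · rw [mul_assoc, hea, hca]
  · rw [mul_assoc, he]

/-- `x` lies in `SyS`. -/
def TwoSidedMultiple (y x : S) : Prop := ∃ p q, x = p * y * q

theorem TwoSidedMultiple.trans {x y z : S} (h : TwoSidedMultiple y x)
    (h' : TwoSidedMultiple z y) : TwoSidedMultiple z x := by
  obtain ⟨p, q, rfl⟩ := h
  obtain ⟨r, t, rfl⟩ := h'
  exact ⟨p * r, t * q, by simp only [mul_assoc]⟩

theorem IsRegularElem.twoSidedMultiple {x y : S} (hx : IsRegularElem x)
    (h : x ∈ principalIdeal y) : TwoSidedMultiple y x := by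
  obtain ⟨v, hv⟩ := hx
  have key : x = x * v * x * (v * x) := by grind
  rcases h with ((rfl | ⟨a, ha⟩) | ⟨b, hb⟩) | hab
  · exact ⟨_, _, key⟩
  · exact ⟨x * v * a, v * x, by grind⟩
  · exact ⟨x * v, b * (v * x), by grind⟩
  · exact hab

theorem principalIdeal_subset {x y : S} (h : TwoSidedMultiple y x) :
    principalIdeal x ⊆ principalIdeal y := by
  obtain ⟨p, q, rfl⟩ := h
  rintro w (((rfl | ⟨a, rfl⟩) | ⟨b, rfl⟩) | ⟨a, b, rfl⟩)
  · exact Or.inr ⟨p, q, rfl⟩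
  · exact Or.inr ⟨a * p, q, by simp only [mul_assoc]⟩
  · exact Or.inr ⟨p, q * b, by simp only [mul_assoc]⟩
  · exact Or.inr ⟨a * p, q * b, by simp only [mul_assoc]⟩

theorem JRel.of_twoSidedMultiple {x y : S} (h : TwoSidedMultiple y x)
    (h' : TwoSidedMultiple x y) : JRel x y :=
  (principalIdeal_subset h).antisymm (principalIdeal_subset h')

theorem JRel.twoSidedMultiple {e f : S} (h : JRel e f) (he : e * e = e) :
    TwoSidedMultiple f e :=
  (isRegularElem_of_idempotent he).twoSidedMultiple
    (h.subset (Or.inl (Or.inl (Or.inl rfl))))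

theorem HRel.twoSidedMultiple {a e : S} (h : HRel a e) (he : e * e = e) :
    TwoSidedMultiple a e ∧ TwoSidedMultiple e a := by
  obtain ⟨b, -, hba, hea, -, -⟩ := h.exists_inverse he
  exact ⟨⟨b, e, by rw [hba, he]⟩, ⟨e, a, by rw [he, hea]⟩⟩

theorem spow_succ_left (s : S) (n : ℕ) : spow s (n + 1) = s * spow s n := by
  induction n with
  | zero => rfl
  | succ n ih => rw [spow, ih, mul_assoc, ← spow, ih]

/-- In a conditionally completely regular semigroup, an idempotent in `SaS` and in `SbS` lies
in `SabS`. -/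
theorem TwoSidedMultiple.mul (hS : CondCompletelyRegular S) {a b g : S} (hg : g * g = g)
    (ha : TwoSidedMultiple a g) (hb : TwoSidedMultiple b g) : TwoSidedMultiple (a * b) g := by
  obtain ⟨p, q, hpq⟩ := ha
  obtain ⟨r, t, hrt⟩ := hb
  obtain ⟨y, hy⟩ : ∃ y, y = b * (t * p) * a := ⟨_, rfl⟩
  have hgy : g = r * y * q := by
    subst hy
    calc g = g * g := hg.symm
      _ = r * b * t * (p * a * q) := by rw [← hrt, ← hpq]
      _ = _ := by simp only [mul_assoc]
  obtain ⟨z, hz⟩ : ∃ z, z = q * g * r := ⟨_, rfl⟩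
  have hzyz : z * y * z = z := by
    calc z * y * z = q * g * (r * y * q) * g * r := by subst hz; simp only [mul_assoc]
      _ = q * ((g * g) * g) * r := by rw [← hgy]; simp only [mul_assoc]
      _ = z := by rw [hg, hg, hz]
  obtain ⟨h, hh, hH⟩ := hS (y * z * y) ⟨z, by
    calc y * z * y = y * (z * y * z) * y := by rw [hzyz]
      _ = y * (z * y * z * y * z) * y := by rw [hzyz, hzyz]
      _ = _ := by simp only [mul_assoc]⟩
  obtain ⟨c, hc, -, -, he, -⟩ := hH.exists_inverse hh
  have hsq : y * z * y = y * z * y * (y * z * y) * c := by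
    rw [mul_assoc (y * z * y), hc, he]
  refine ⟨r * y * z * b * (t * p), t * p * a * z * y * c * z * y * q, ?_⟩
  calc g = g * g * g * g * g := by simp only [hg]
    _ = (r * y * q) * g * (r * y * q) * g * (r * y * q) := by rw [← hgy]
    _ = r * (y * z * y) * z * y * q := by subst hz; simp only [mul_assoc]
    _ = r * (y * z * y * (y * z * y) * c) * z * y * q := by rw [← hsq]
    _ = r * y * z * (y * y) * z * y * c * z * y * q := by simp only [mul_assoc]
    _ = _ := by rw [show y * y = b * (t * p) * a * (b * (t * p) * a) by rw [← hy]]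
                simp only [mul_assoc]

theorem TwoSidedMultiple.spow (hS : CondCompletelyRegular S) {s g : S} (hg : g * g = g)
    (h : TwoSidedMultiple s g) (n : ℕ) : TwoSidedMultiple (spow s n) g := by
  induction n with
  | zero => exact h
  | succ n ih => exact ih.mul hS hg h

theorem TwoSidedMultiple.of_spow {s g : S} {n : ℕ}
    (h : TwoSidedMultiple (_root_.spow s n) g) : TwoSidedMultiple s g := by
  cases n with
  | zero => exact h
  | succ n =>
    obtain ⟨p, q, hpq⟩ := h
    exact ⟨p * _root_.spow s n, q, by rw [hpq, _root_.spow]; simp only [mul_assoc]⟩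

/-- If `s ^ n ℋ e`, the idempotents in `SsS` are exactly those in `SeS`. -/
theorem HRel.twoSidedMultiple_iff (hS : CondCompletelyRegular S) {s e g : S} {n : ℕ}
    (h : HRel (spow s n) e) (he : e * e = e) (hg : g * g = g) :
    TwoSidedMultiple s g ↔ TwoSidedMultiple e g :=
  ⟨fun hs => (hs.spow hS hg n).trans (h.twoSidedMultiple he).2,
    fun hs => (hs.trans (h.twoSidedMultiple he).1).of_spow⟩

/-- If `s ^ n ℋ e`, some weak inverse of `s` is 𝒟-related to `e`. -/
theorem HRel.exists_weakInverse {s e : S} {n : ℕ} (h : HRel (spow s n) e) (he : e * e = e) :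
    ∃ z, z = z * s * z ∧ DRel z e := by
  obtain ⟨b, hab, -, -, -, hbe⟩ := h.exists_inverse he
  cases n with
  | zero =>
    have hsb : s * b = e := hab
    exact ⟨b, by rw [mul_assoc, hsb, hbe], e, LRel.of_mul_eq hsb hbe, rfl⟩
  | succ n =>
    have hsz : s * (spow s n * b) = e := by rw [← mul_assoc, ← spow_succ_left, hab]
    exact ⟨spow s n * b, by rw [mul_assoc _ s, hsz, mul_assoc, hbe], e,
      LRel.of_mul_eq hsz (by rw [mul_assoc, hbe]), rfl⟩

/-- An element 𝒟-related to a weak inverse `z` of `s` is ℛ-related to an idempotent in `SsS`. -/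
theorem DRel.exists_idempotent {s z x : S} (hz : z = z * s * z) (h : DRel z x) :
    ∃ g, g * g = g ∧ RRel g x ∧ TwoSidedMultiple s g := by
  obtain ⟨u, hzu, hux⟩ := h
  obtain ⟨c, hc⟩ : ∃ c, z = c * u := by
    rcases hzu.eq_or_eq_mul_s19 with rfl | h
    · exact ⟨_, hz⟩
    · exact h
  obtain ⟨d, hd⟩ : ∃ d, u = d * z := by
    rcases LRel.eq_or_eq_mul_s19 hzu.symm with rfl | h
    · exact ⟨_, hz⟩
    · exact h
  have hu : u * (s * c) * u = u := by
    calc u * (s * c) * u = u * s * (c * u) := by simp only [mul_assoc]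
      _ = d * (z * s * z) := by rw [← hc, hd]; simp only [mul_assoc]
      _ = u := by rw [← hz, ← hd]
  refine ⟨u * (s * c), by rw [← mul_assoc, hu], (RRel.of_mul_eq hu rfl).trans hux,
    u, c, (mul_assoc _ _ _).symm⟩

/-- Each element ℛ-related to an idempotent in `StS` is 𝒟-related to a weak inverse of `t`. -/
theorem TwoSidedMultiple.exists_weakInverse {t g x : S} (hg : g * g = g)
    (h : TwoSidedMultiple t g) (hx : RRel g x) : ∃ w, w = w * t * w ∧ DRel w x := by
  obtain ⟨p, q, hpq⟩ := h
  have key : g * p * t * (q * g) = g := by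
    calc g * p * t * (q * g) = g * (p * t * q) * g := by simp only [mul_assoc]
      _ = g := by rw [← hpq, hg, hg]
  have hP : g * p * t * (q * g * (g * p)) = g * p := by
    rw [← mul_assoc, key, ← mul_assoc, hg]
  refine ⟨q * g * (g * p), ?_, g * p, LRel.of_mul_eq hP rfl,
    (RRel.of_mul_eq (a := t * (q * g)) ?_ rfl).trans hx⟩
  · rw [mul_assoc (q * g), mul_assoc (q * g), hP]
  · rw [← mul_assoc, key]

theorem exists_weakInverse_of_twoSidedMultiple (hS : CondCompletelyRegular S) {s t e f x : S}
    {n m : ℕ} (he : e * e = e) (hf : f * f = f) (hse : HRel (spow s n) e)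
    (htf : HRel (spow t m) f) (hef : TwoSidedMultiple f e)
    (h : ∃ z, z = z * s * z ∧ DRel z x) : ∃ w, w = w * t * w ∧ DRel w x := by
  obtain ⟨z, hz, hzx⟩ := h
  obtain ⟨g, hg, hgx, hsg⟩ := hzx.exists_idempotent hz
  have hfg := ((hse.twoSidedMultiple_iff hS he hg).1 hsg).trans hef
  exact ((htf.twoSidedMultiple_iff hS hf hg).2 hfg).exists_weakInverse hg hgx

theorem rhoRel_of_JRel (hS : CondCompletelyRegular S) {s t e f : S} {n m : ℕ}
    (he : e * e = e) (hf : f * f = f) (hef : JRel e f) (hse : HRel (spow s n) e)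
    (htf : HRel (spow t m) f) : rhoRel s t := fun _ =>
  ⟨exists_weakInverse_of_twoSidedMultiple hS he hf hse htf (hef.twoSidedMultiple he),
    exists_weakInverse_of_twoSidedMultiple hS hf he htf hse
      (JRel.twoSidedMultiple hef.symm hf)⟩

theorem rhoRel.twoSidedMultiple (hS : CondCompletelyRegular S) {s t e f : S} {n m : ℕ}
    (h : rhoRel s t) (he : e * e = e) (hf : f * f = f) (hse : HRel (spow s n) e)
    (htf : HRel (spow t m) f) : TwoSidedMultiple f e := by
  obtain ⟨w, hw, hwe⟩ := (h e).1 (hse.exists_weakInverse he)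
  obtain ⟨g, hg, hge, htg⟩ := hwe.exists_idempotent hw
  have heg : e = g * e := by
    rcases RRel.eq_or_eq_mul_s19 hge.symm with rfl | ⟨a, rfl⟩
    · exact he.symm
    · rw [← mul_assoc, hg]
  have : TwoSidedMultiple g e := ⟨g, e, by rw [hg, ← heg]⟩
  exact this.trans ((htf.twoSidedMultiple_iff hS hf hg).1 htg)

/-- In a conditionally completely regular semigroup, a regular element 𝒥-equivalent to `e` is
ρ-related to each `s` with `s ^ n ℋ e`. -/
theorem IsRegularElem.rhoRel (hS : CondCompletelyRegular S) {s u e : S} {n : ℕ}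
    (hu : IsRegularElem u) (he : e * e = e) (hse : HRel (spow s n) e)
    (hue : TwoSidedMultiple u e) (heu : TwoSidedMultiple e u) : rhoRel u s := by
  obtain ⟨h, hh, hH⟩ := hS u hu
  have hJ := hH.twoSidedMultiple hh
  exact rhoRel_of_JRel (n := 0) hS hh he
    (JRel.of_twoSidedMultiple (hJ.1.trans heu) (hue.trans hJ.2)) hH hse

end GreenRelations

/-- In a group-bound, conditionally completely regular semigroup:
(i) `s ρ t` iff there are 𝒥-related idempotents `e, f` with some positive power
of `s` ℋ-related to `e` and some positive power of `t` ℋ-related to `f`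
(the ρ-classes are the sets `K_{J_e}`);
(ii) each ρ-class is an Archimedean subsemigroup: if `s ρ t` then
`s^n = u * t * v` for some `n ≥ 1` and `u, v` in the ρ-class of `s`. -/
theorem stmt19 {S : Type*} [Semigroup S]
    (hGB : ∀ a : S, ∃ n : ℕ, ∃ e : S, e * e = e ∧ HRel (spow a n) e)
    (hS : CondCompletelyRegular S) :
    (∀ s t : S, rhoRel s t ↔
      ∃ e f : S, e * e = e ∧ f * f = f ∧ JRel e f ∧
        (∃ n : ℕ, HRel (spow s n) e) ∧ (∃ m : ℕ, HRel (spow t m) f)) ∧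
    (∀ s t : S, rhoRel s t →
      ∃ n : ℕ, ∃ u v : S, rhoRel u s ∧ rhoRel v s ∧ spow s n = u * t * v) := by
  have hJ : ∀ s t : S, rhoRel s t → ∃ e f : S, e * e = e ∧ f * f = f ∧ JRel e f ∧
      (∃ n : ℕ, HRel (spow s n) e) ∧ (∃ m : ℕ, HRel (spow t m) f) := by
    intro s t h
    obtain ⟨n, e, he, hse⟩ := hGB s
    obtain ⟨m, f, hf, htf⟩ := hGB t
    exact ⟨e, f, he, hf, JRel.of_twoSidedMultiple (h.twoSidedMultiple hS he hf hse htf)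
      (rhoRel.twoSidedMultiple hS (fun x => (h x).symm) hf he htf hse), ⟨n, hse⟩, ⟨m, htf⟩⟩
  refine ⟨fun s t => ⟨hJ s t, ?_⟩, fun s t h => ?_⟩
  · rintro ⟨e, f, he, hf, hef, ⟨n, hse⟩, ⟨m, htf⟩⟩
    exact rhoRel_of_JRel hS he hf hef hse htf
  · obtain ⟨e, f, he, hf, hef, ⟨n, hse⟩, ⟨m, htf⟩⟩ := hJ s t h
    obtain ⟨p, q, hpq⟩ :=
      (htf.twoSidedMultiple_iff hS hf he).2 (hef.twoSidedMultiple he)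
    obtain ⟨b, -, hba, hea, hae, -⟩ := hse.exists_inverse he
    have key : e * p * t * (q * e) = e := by
      calc e * p * t * (q * e) = e * (p * t * q) * e := by simp only [mul_assoc]
        _ = e := by rw [← hpq, he, he]
    have hv : e * p * t * (q * spow s n) = spow s n := by
      calc e * p * t * (q * spow s n) = e * p * t * (q * e) * spow s n := by
            simp only [mul_assoc, hea]
        _ = spow s n := by rw [key, hea]
    refine ⟨n, e * p, q * spow s n, ?_, ?_, hv.symm⟩
    · refine IsRegularElem.rhoRel hS ⟨t * (q * e), ?_⟩ he hse
        ⟨e, t * (q * e), ?_⟩ ⟨e, p, by rw [he]⟩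
      · rw [← mul_assoc (e * p), key, ← mul_assoc, he]
      · rw [← mul_assoc e e p, he, ← mul_assoc, key]
    · refine IsRegularElem.rhoRel hS ⟨b * (e * p * t), ?_⟩ he hse
        ⟨b * (e * p * t), e, ?_⟩ ⟨q, spow s n, by rw [mul_assoc, hea]⟩
      · rw [mul_assoc, mul_assoc b, hv, hba, mul_assoc, hae]
      · rw [mul_assoc b, hv, hba, he]
end
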